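/- Let L and S be positive integers with S ≥ L+2, let γ ∈ (0,1) be the positive root of Lγ + Sγ² = 1, set 1−τ = −log(Sγ)/log γ, let (ξ^j)_{j≥1} be the (L,S)-sequence of points, and let (t_n) be given by t₀ = 1, t₁ = L+S, t_n = L t_{n−1} + S t_{n−2}. Then there exist constants c₃, c₃′ > 0 such that for every integer n ≥ 1 one has c₃′ · t_n^{1−τ} ≤ t_n · D(ξ¹, ξ², …, ξ^{t_n}) ≤ c₃ · t_n^{1−τ}. -/

import Mathlib

open Finset Real

noncomputable section

/-- The `k`-th digit of `n` in base `b`. -/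
def lsDigit (b n k : ℕ) : ℕ := n / b ^ k % b

/-- Membership in the set `N_{L,S}`: for every `k`, the pair of consecutive digits
`(a_k(n), a_{k+1}(n))` in base `L+S` does not lie in
`{L,…,L+S−1} × {1,…,L+S−1}`. -/
def memNLS (L S n : ℕ) : Prop :=
  ∀ k : ℕ, ¬ (L ≤ lsDigit (L + S) n k ∧ lsDigit (L + S) n k ≤ L + S - 1 ∧
      1 ≤ lsDigit (L + S) n (k + 1) ∧ lsDigit (L + S) n (k + 1) ≤ L + S - 1)

/-- The modified digit `ã`: `ã = a` if `a ≤ L−1`, and `ã = L + γ(a−L)` if `L ≤ a`. -/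
def lsTilde (L : ℕ) (γ : ℝ) (a : ℕ) : ℝ :=
  if a < L then (a : ℝ) else (L : ℝ) + γ * ((a : ℝ) - (L : ℝ))

/-- The radical-inverse-type function `φ_{L,S}(n) = Σ_{k=0}^{M} ã_k(n) γ^{k+1}`,
with `M = ⌊log_{L+S} n⌋`. -/
def lsPhi (L S : ℕ) (γ : ℝ) (n : ℕ) : ℝ :=
  ∑ k ∈ Finset.range (Nat.log (L + S) n + 1),
    lsTilde L γ (lsDigit (L + S) n k) * γ ^ (k + 1)

/-- The `(L,S)`-sequence of points: `ξ^j = φ_{L,S}(n_j)` where `n_1 < n_2 < ⋯`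
is the increasing enumeration of `N_{L,S}` (so `n_j = Nat.nth (memNLS L S) (j-1)`). -/
def lsSeq (L S : ℕ) (γ : ℝ) (j : ℕ) : ℝ :=
  lsPhi L S γ (Nat.nth (memNLS L S) (j - 1))

/-- One-dimensional discrepancy of the first `N` terms `x 1, …, x N` of a sequence:
`sup_{0 ≤ a < b ≤ 1} |(1/N) Σ_{j=1}^N χ_{[a,b)}(x j) − (b−a)|`. -/
def discrep (x : ℕ → ℝ) (N : ℕ) : ℝ :=
  ⨆ p : {p : ℝ × ℝ // 0 ≤ p.1 ∧ p.1 < p.2 ∧ p.2 ≤ 1},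
    |(∑ j ∈ Finset.Icc 1 N,
        Set.indicator (Set.Ico p.1.1 p.1.2) (fun _ => (1 : ℝ)) (x j)) / N
      - (p.1.2 - p.1.1)|

/-- Two-dimensional (star) discrepancy of the first `N` terms of a sequence of points
in the unit square:
`sup_{0 < a ≤ 1, 0 < b ≤ 1} |(1/N) Σ_{j=1}^N χ_{[0,a)×[0,b)}(x j) − ab|`. -/
def discrep2 (x : ℕ → ℝ × ℝ) (N : ℕ) : ℝ :=
  ⨆ p : {p : ℝ × ℝ // 0 < p.1 ∧ p.1 ≤ 1 ∧ 0 < p.2 ∧ p.2 ≤ 1},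
    |(∑ j ∈ Finset.Icc 1 N,
        Set.indicator (Set.Ico (0 : ℝ) p.1.1) (fun _ => (1 : ℝ)) (x j).1 *
        Set.indicator (Set.Ico (0 : ℝ) p.1.2) (fun _ => (1 : ℝ)) (x j).2) / N
      - p.1.1 * p.1.2|

/-! Let `P n` be the set of the first `t n` points. Reading off the lowest digit shows that `P n` is
made of `L` copies of `P (n - 1)` scaled by `γ`, followed by `S` copies of `P (n - 2)` scaled by
`γ ^ 2`. Hence the local discrepancy of `P n` at a point equals that of `P (n - 1)` or `P (n - 2)`
at a rescaled point, up to bounded multiples of the defects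
`t (n - 1) - γ * t n = (1 - γ) * (-(S * γ)) ^ n` and `t (n - 2) - γ * t (n - 1)`. If `L + 2 ≤ S`,
then `1 < S * γ`, so these errors add up to `O((S * γ) ^ n)`. Conversely the interval `[0, γ)` has
the defect itself as its local discrepancy. Since `t n` is comparable to `γ⁻¹ ^ n`, the power
`(S * γ) ^ n` is comparable to `t n ^ (-log (S * γ) / log γ)`. -/

section Digits

variable {L S : ℕ} {γ : ℝ}

theorem lsDigit_add_mul_zero {b i : ℕ} (hi : i < b) (m : ℕ) : lsDigit b (i + b * m) 0 = i := by
  simp [lsDigit, Nat.mod_eq_of_lt hi]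

theorem lsDigit_add_mul_succ {b i : ℕ} (hi : i < b) (m k : ℕ) :
    lsDigit b (i + b * m) (k + 1) = lsDigit b m k := by
  rw [lsDigit, lsDigit, pow_succ', ← Nat.div_div_eq_div_mul, Nat.add_mul_div_left _ _ (by omega),
    Nat.div_eq_of_lt hi, Nat.zero_add]

theorem memNLS_iff (hL : 0 < L) {n : ℕ} :
    memNLS L S n ↔ ∀ k, L ≤ lsDigit (L + S) n k → lsDigit (L + S) n (k + 1) = 0 := by
  refine forall_congr' fun k => ?_
  have hlt (k : ℕ) : lsDigit (L + S) n k < L + S := Nat.mod_lt _ (by omega)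
  have := hlt k
  have := hlt (k + 1)
  omega

theorem memNLS_zero (hL : 0 < L) : memNLS L S 0 :=
  (memNLS_iff hL).2 fun k _ => by simp [lsDigit]

theorem memNLS_add_mul (hL : 0 < L) {i : ℕ} (hi : i < L + S) {m : ℕ} :
    memNLS L S (i + (L + S) * m) ↔ (L ≤ i → L + S ∣ m) ∧ memNLS L S m := by
  have hdvd : L + S ∣ m ↔ lsDigit (L + S) m 0 = 0 := by simp [lsDigit, Nat.dvd_iff_mod_eq_zero]
  rw [memNLS_iff hL, memNLS_iff hL, hdvd, Nat.and_forall_add_one.symm]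
  simp only [lsDigit_add_mul_zero hi, lsDigit_add_mul_succ hi]

theorem memNLS_add_mul_of_lt {i : ℕ} (hi : i < L) {m : ℕ} :
    memNLS L S (i + (L + S) * m) ↔ memNLS L S m := by
  rw [memNLS_add_mul (by omega) (by omega)]
  exact and_iff_right fun h => absurd h hi.not_ge

theorem memNLS_mul (hL : 0 < L) {m : ℕ} : memNLS L S ((L + S) * m) ↔ memNLS L S m := by
  simpa only [zero_add] using memNLS_add_mul_of_lt (S := S) hL (m := m)

theorem memNLS.induction (hL : 0 < L) (hb : 1 < L + S) {motive : ℕ → Prop} (zero : motive 0)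
    (long : ∀ i < L, ∀ m, motive m → motive (i + (L + S) * m))
    (short : ∀ i < S, ∀ m, motive m → motive (L + i + (L + S) * ((L + S) * m)))
    {n : ℕ} (hn : memNLS L S n) : motive n := by
  induction n using Nat.strong_induction_on with
  | _ n ih =>
  rcases n.eq_zero_or_pos with rfl | hpos
  · exact zero
  obtain ⟨i, m, hi, rfl⟩ : ∃ i m, i < L + S ∧ n = i + (L + S) * m :=
    ⟨_, _, Nat.mod_lt n (by omega), (Nat.mod_add_div n (L + S)).symm⟩
  obtain ⟨hdvd, hm⟩ := (memNLS_add_mul hL hi).1 hn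
  have hlt : m < i + (L + S) * m := by nlinarith
  rcases lt_or_ge i L with hiL | hiL
  · exact long i hiL m (ih m hlt hm)
  · obtain ⟨i, rfl⟩ := Nat.exists_eq_add_of_le hiL
    obtain ⟨r, rfl⟩ := hdvd hiL
    exact short i (by omega) r (ih r (by nlinarith) ((memNLS_mul hL).1 hm))

theorem lsTilde_of_lt {a : ℕ} (ha : a < L) : lsTilde L γ a = a := if_pos ha

theorem lsTilde_add (i : ℕ) : lsTilde L γ (L + i) = L + γ * i := by
  simp [lsTilde]

theorem lsPhi_zero (hL : 0 < L) : lsPhi L S γ 0 = 0 := by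
  simp [lsPhi, lsDigit, lsTilde, hL]

theorem lsPhi_eq_sum_range (hL : 0 < L) (hb : 1 < L + S) {n K : ℕ} (hn : n < (L + S) ^ K)
    (hK : K ≠ 0) :
    lsPhi L S γ n = ∑ k ∈ range K, lsTilde L γ (lsDigit (L + S) n k) * γ ^ (k + 1) := by
  refine sum_subset (range_mono (Nat.log_lt_of_lt_pow' hK hn)) fun k _ hk => ?_
  have hlog : Nat.log (L + S) n < k := by simpa [Nat.lt_succ_iff] using hk
  rw [lsDigit, Nat.div_eq_of_lt (Nat.lt_pow_of_log_lt hb hlog), Nat.zero_mod, lsTilde_of_lt hL]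
  simp

theorem lsPhi_add_mul (hL : 0 < L) (hb : 1 < L + S) {i : ℕ} (hi : i < L + S) (m : ℕ) :
    lsPhi L S γ (i + (L + S) * m) = (lsTilde L γ i + lsPhi L S γ m) * γ := by
  have hm : m < (L + S) ^ (m + 1) := m.lt_succ_self.trans (Nat.lt_pow_self hb)
  have hn : i + (L + S) * m < (L + S) ^ (m + 1 + 1) := calc
    i + (L + S) * m < (L + S) * (m + 1) := by rw [mul_add_one]; omega
    _ ≤ (L + S) ^ (m + 1 + 1) := by rw [pow_succ' _ (m + 1)]; exact Nat.mul_le_mul_left _ hm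
  rw [lsPhi_eq_sum_range hL hb hm (by omega), lsPhi_eq_sum_range hL hb hn (by omega),
    sum_range_succ', lsDigit_add_mul_zero hi, add_comm, zero_add, pow_one, add_mul _ _ γ, sum_mul]
  simp only [lsDigit_add_mul_succ hi, pow_succ, mul_assoc]

theorem lsPhi_long (hb : 1 < L + S) {i : ℕ} (hi : i < L) (m : ℕ) :
    lsPhi L S γ (i + (L + S) * m) = (i + lsPhi L S γ m) * γ := by
  rw [lsPhi_add_mul (by omega) hb (by omega), lsTilde_of_lt hi]

theorem lsPhi_short (hL : 0 < L) (hb : 1 < L + S) {i : ℕ} (hi : i < S) (m : ℕ) :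
    lsPhi L S γ (L + i + (L + S) * ((L + S) * m)) = L * γ + (i + lsPhi L S γ m) * γ ^ 2 := by
  have hzero := lsPhi_long (γ := γ) hb hL m
  rw [Nat.cast_zero, zero_add, zero_add] at hzero
  rw [lsPhi_add_mul hL hb (by omega), lsTilde_add, hzero]
  ring

end Digits

section Admissible

variable {L S : ℕ}

open Classical in
/-- The elements of `N_{L,S}` with at most `n` digits in base `L + S`. They index the left endpoints
of the `n`-th `(L,S)`-partition, so that `t_n` is their number. -/
def lsAdmissible (L S n : ℕ) : Finset ℕ := {m ∈ range ((L + S) ^ n) | memNLS L S m}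

theorem mem_lsAdmissible {n m : ℕ} : m ∈ lsAdmissible L S n ↔ m < (L + S) ^ n ∧ memNLS L S m := by
  simp [lsAdmissible]

theorem lsAdmissible_zero (hL : 0 < L) : lsAdmissible L S 0 = {0} := by
  ext m
  rw [mem_lsAdmissible, pow_zero, Nat.lt_one_iff, Finset.mem_singleton]
  exact and_iff_left_of_imp fun h => h ▸ memNLS_zero hL

theorem sum_range_mul {M : Type*} [AddCommMonoid M] (b k : ℕ) (g : ℕ → M) :
    ∑ m ∈ range (b * k), g m = ∑ i ∈ range b, ∑ m ∈ range k, g (i + b * m) := by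
  induction k with
  | zero => simp
  | succ k ih =>
    rw [mul_add_one, sum_range_add, ih]
    simp only [sum_range_succ, sum_add_distrib, add_comm]

theorem mul_mem_lsAdmissible (hL : 0 < L) {n m : ℕ} :
    (L + S) * m ∈ lsAdmissible L S n ↔ m ∈ lsAdmissible L S (n - 1) := by
  have hb : 0 < L + S := by omega
  rw [mem_lsAdmissible, mem_lsAdmissible, memNLS_mul hL]
  cases n with
  | zero => rw [zero_tsub, pow_zero, Nat.lt_one_iff, Nat.lt_one_iff, Nat.mul_eq_zero,
      or_iff_right hb.ne']
  | succ n => rw [pow_succ', Nat.mul_lt_mul_left hb, Nat.add_sub_cancel]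

theorem sum_lsAdmissible_dvd {M : Type*} [AddCommMonoid M] (hL : 0 < L) (n : ℕ) (g : ℕ → M) :
    ∑ m ∈ lsAdmissible L S n with L + S ∣ m, g m =
      ∑ m ∈ lsAdmissible L S (n - 1), g ((L + S) * m) := by
  have hb : 0 < L + S := by omega
  have himage : (lsAdmissible L S (n - 1)).image ((L + S) * ·) =
      {m ∈ lsAdmissible L S n | L + S ∣ m} := by
    ext m
    simp only [Finset.mem_image, Finset.mem_filter]
    constructor
    · rintro ⟨r, hr, rfl⟩
      exact ⟨(mul_mem_lsAdmissible hL).2 hr, dvd_mul_right _ _⟩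
    · rintro ⟨hm, r, rfl⟩
      exact ⟨r, (mul_mem_lsAdmissible hL).1 hm, rfl⟩
  rw [← himage, sum_image (mul_right_injective₀ hb.ne').injOn]

/-- A lowest digit below `L` is unconstrained, one at least `L` is followed by a zero digit. For
`n = 0` the truncated `n - 1 = 0` is the right index, since `0` is its own tail. -/
theorem sum_lsAdmissible_succ {M : Type*} [AddCommMonoid M] (hL : 0 < L) (n : ℕ) (g : ℕ → M) :
    ∑ m ∈ lsAdmissible L S (n + 1), g m =
      ∑ i ∈ range L, ∑ m ∈ lsAdmissible L S n, g (i + (L + S) * m) +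
      ∑ i ∈ range S, ∑ m ∈ lsAdmissible L S (n - 1), g (L + i + (L + S) * ((L + S) * m)) := by
  classical
  rw [lsAdmissible, sum_filter, pow_succ', sum_range_mul, sum_range_add]
  congr 1 <;> refine sum_congr rfl fun i hi => ?_
  · rw [lsAdmissible, sum_filter]
    exact sum_congr rfl fun m _ => if_congr (memNLS_add_mul_of_lt (Finset.mem_range.1 hi)) rfl rfl
  · rw [← sum_lsAdmissible_dvd hL n fun m => g (L + i + (L + S) * m), lsAdmissible, filter_filter,
      sum_filter]
    refine sum_congr rfl fun m _ => if_congr ?_ rfl rfl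
    rw [memNLS_add_mul hL (Nat.add_lt_add_left (Finset.mem_range.1 hi) L), and_comm,
      forall_prop_of_true (Nat.le_add_right L i)]

theorem card_lsAdmissible_succ (hL : 0 < L) (n : ℕ) :
    #(lsAdmissible L S (n + 1)) = L * #(lsAdmissible L S n) + S * #(lsAdmissible L S (n - 1)) := by
  simpa only [sum_const, Finset.card_range, smul_eq_mul, mul_one] using
    sum_lsAdmissible_succ (S := S) hL n fun _ => (1 : ℕ)

theorem card_lsAdmissible (hL : 0 < L) {t : ℕ → ℕ} (ht0 : t 0 = 1) (ht1 : t 1 = L + S)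
    (htrec : ∀ n, 2 ≤ n → t n = L * t (n - 1) + S * t (n - 2)) (n : ℕ) :
    #(lsAdmissible L S n) = t n := by
  induction n using Nat.twoStepInduction with
  | zero => simp [lsAdmissible_zero hL, ht0]
  | one => simp [card_lsAdmissible_succ hL, lsAdmissible_zero hL, ht1]
  | more n ih₀ ih₁ => simp [card_lsAdmissible_succ hL (n + 1), ih₀, ih₁, htrec (n + 2)]

theorem sum_range_count_nth {M : Type*} [AddCommMonoid M] (p : ℕ → Prop) [DecidablePred p]
    (N : ℕ) (g : ℕ → M) :
    ∑ j ∈ range (Nat.count p N), g (Nat.nth p j) = ∑ m ∈ range N with p m, g m := by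
  induction N with
  | zero => simp
  | succ N ih =>
    rw [Nat.count_succ, range_add_one, filter_insert]
    split_ifs with hN
    · rw [sum_range_succ, Nat.nth_count hN, ih, sum_insert (by simp), add_comm]
    · exact ih

theorem sum_lsSeq {M : Type*} [AddCommMonoid M] (γ : ℝ) (n : ℕ) (f : ℝ → M) :
    ∑ j ∈ Icc 1 #(lsAdmissible L S n), f (lsSeq L S γ j) =
      ∑ m ∈ lsAdmissible L S n, f (lsPhi L S γ m) := by
  classical
  have hcount : Nat.count (memNLS L S) ((L + S) ^ n) = #(lsAdmissible L S n) := by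
    rw [Nat.count_eq_card_filter_range, lsAdmissible]
  rw [← Ico_add_one_right_eq_Icc, sum_Ico_eq_sum_range, Nat.add_sub_cancel, ← hcount]
  simp only [lsSeq, Nat.add_sub_cancel_left]
  rw [sum_range_count_nth (memNLS L S) _ fun m => f (lsPhi L S γ m), lsAdmissible]

end Admissible

section LocalDiscrepancy

/-- The local discrepancy at `u` of `x 1, …, x N`: how far the number of these points below `u`
deviates from `N * u`. -/
def localDiscrep (x : ℕ → ℝ) (N : ℕ) (u : ℝ) : ℝ := #{j ∈ Icc 1 N | x j < u} - N * u

variable {x : ℕ → ℝ} {N : ℕ} {a b : ℝ}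

theorem sum_indicator_Ico_eq_card_sub_card (hab : a ≤ b) :
    ∑ j ∈ Icc 1 N, Set.indicator (Set.Ico a b) (fun _ => (1 : ℝ)) (x j) =
      #{j ∈ Icc 1 N | x j < b} - #{j ∈ Icc 1 N | x j < a} := by
  simp only [card_filter, Nat.cast_sum, Nat.cast_ite, Nat.cast_one, Nat.cast_zero,
    ← sum_sub_distrib]
  refine sum_congr rfl fun j _ => ?_
  simp only [Set.indicator, Set.mem_Ico]
  grind

theorem abs_sum_indicator_Ico_div_sub (hN : N ≠ 0) (hab : a ≤ b) :
    |(∑ j ∈ Icc 1 N, Set.indicator (Set.Ico a b) (fun _ => (1 : ℝ)) (x j)) / N - (b - a)| =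
      |localDiscrep x N b - localDiscrep x N a| / N := by
  rw [← Nat.abs_cast N, ← abs_div, Nat.abs_cast, sum_indicator_Ico_eq_card_sub_card hab,
    localDiscrep, localDiscrep]
  congr 1
  field_simp
  ring

theorem abs_sum_indicator_div_sub_le_one (x : ℕ → ℝ) (N : ℕ)
    (p : {p : ℝ × ℝ // 0 ≤ p.1 ∧ p.1 < p.2 ∧ p.2 ≤ 1}) :
    |(∑ j ∈ Icc 1 N, Set.indicator (Set.Ico p.1.1 p.1.2) (fun _ => (1 : ℝ)) (x j)) / N
      - (p.1.2 - p.1.1)| ≤ 1 := by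
  obtain ⟨⟨a, b⟩, ha, hab, hb⟩ := p
  have hnonneg : 0 ≤ ∑ j ∈ Icc 1 N, Set.indicator (Set.Ico a b) (fun _ => (1 : ℝ)) (x j) :=
    sum_nonneg fun j _ => Set.indicator_nonneg (fun _ _ => zero_le_one) _
  have hle : ∑ j ∈ Icc 1 N, Set.indicator (Set.Ico a b) (fun _ => (1 : ℝ)) (x j) ≤ N := by
    refine (sum_le_card_nsmul _ _ 1 fun j _ => ?_).trans_eq (by simp)
    exact Set.indicator_le' (fun _ _ => le_rfl) (fun _ _ => zero_le_one) _
  have hfrac := div_le_one_of_le₀ hle N.cast_nonneg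
  have hfrac' := div_nonneg hnonneg N.cast_nonneg
  dsimp only at *
  rw [abs_le]
  constructor <;> linarith

theorem abs_localDiscrep_sub_le (ha : 0 ≤ a) (hab : a < b) (hb : b ≤ 1) :
    |localDiscrep x N b - localDiscrep x N a| ≤ N * discrep x N := by
  rcases N.eq_zero_or_pos with rfl | hN
  · simp [localDiscrep]
  rw [← div_le_iff₀' (Nat.cast_pos.2 hN), ← abs_sum_indicator_Ico_div_sub hN.ne' hab.le]
  exact le_ciSup ⟨1, Set.forall_mem_range.2 (abs_sum_indicator_div_sub_le_one x N)⟩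
    (⟨(a, b), ha, hab, hb⟩ : {p : ℝ × ℝ // 0 ≤ p.1 ∧ p.1 < p.2 ∧ p.2 ≤ 1})

theorem mul_discrep_le {M : ℝ} (hM : ∀ u ∈ Set.Icc (0 : ℝ) 1, |localDiscrep x N u| ≤ M) :
    N * discrep x N ≤ 2 * M := by
  rcases N.eq_zero_or_pos with rfl | hN
  · simpa [localDiscrep] using hM 0 ⟨le_rfl, zero_le_one⟩
  have : Nonempty {p : ℝ × ℝ // 0 ≤ p.1 ∧ p.1 < p.2 ∧ p.2 ≤ 1} := ⟨⟨(0, 1), by norm_num⟩⟩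
  rw [← le_div_iff₀' (Nat.cast_pos.2 hN)]
  refine ciSup_le ?_
  rintro ⟨⟨a, b⟩, ha, hab, hb⟩
  rw [abs_sum_indicator_Ico_div_sub hN.ne' hab.le]
  gcongr
  linarith [abs_sub (localDiscrep x N b) (localDiscrep x N a), hM a ⟨ha, hab.le.trans hb⟩,
    hM b ⟨ha.trans hab.le, hb⟩]

end LocalDiscrepancy

section Translates

variable {R : Type*} [CommRing R] [LinearOrder R] [IsStrictOrderedRing R]

theorem sum_range_sub_of_step {M : Type*} [AddCommMonoid M] {F : R → M} {c : M}
    (hzero : ∀ x ≤ 0, F x = 0) (hone : ∀ x, 1 ≤ x → F x = c) {j K : ℕ} (hj : j < K) {y : R}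
    (hy : y ∈ Set.Icc (0 : R) 1) : ∑ i ∈ range K, F (j + y - i) = j • c + F y := by
  obtain ⟨hy0, hy1⟩ := hy
  obtain ⟨r, rfl⟩ := Nat.exists_eq_add_of_lt hj
  have hbelow : ∑ i ∈ range j, F (j + y - i) = j • c := by
    rw [sum_congr rfl fun i hi => hone _ ?_, sum_const, Finset.card_range]
    have : (i : R) + 1 ≤ j := by exact_mod_cast Finset.mem_range.1 hi
    linarith
  have habove : ∑ i ∈ range r, F (j + y - (j + (i + 1) : ℕ)) = 0 := by
    refine sum_eq_zero fun i _ => hzero _ ?_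
    push_cast
    linarith [i.cast_nonneg (α := R)]
  rw [add_assoc, sum_range_add, sum_range_succ', hbelow, habove]
  simp

theorem exists_nat_lt_add_eq [FloorSemiring R] {K : ℕ} (hK : 0 < K) {z : R}
    (hz : z ∈ Set.Icc (0 : R) K) : ∃ j < K, ∃ y ∈ Set.Icc (0 : R) 1, z = j + y := by
  rcases hz.2.eq_or_lt with rfl | hlt
  · exact ⟨K - 1, by omega, 1, ⟨zero_le_one, le_rfl⟩, by rw [Nat.cast_pred hK, sub_add_cancel]⟩
  · exact ⟨⌊z⌋₊, (Nat.floor_lt hz.1).2 hlt, z - ⌊z⌋₊, ⟨by linarith [Nat.floor_le hz.1],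
      by linarith [Nat.lt_floor_add_one z]⟩, (add_sub_cancel _ _).symm⟩

end Translates

/-- `γ` is the contraction ratio of the `(L,S)`-partitions: an interval is split into `L` long ones,
scaled by `γ`, followed by `S` short ones, scaled by `γ ^ 2`. -/
structure IsLSRatio (L S : ℕ) (γ : ℝ) : Prop where
  left_pos : 0 < L
  right_pos : 0 < S
  pos : 0 < γ
  root : (L : ℝ) * γ + (S : ℝ) * γ ^ 2 = 1

/-- The number of the first `t_n` points of the `(L,S)`-sequence that lie below `x`. -/
def lsCount (L S : ℕ) (γ : ℝ) (n : ℕ) (x : ℝ) : ℕ := #{m ∈ lsAdmissible L S n | lsPhi L S γ m < x}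

/-- The local discrepancy of the first `t_n` points of the `(L,S)`-sequence. -/
def lsLocalDiscrep (L S : ℕ) (γ : ℝ) (n : ℕ) (x : ℝ) : ℝ :=
  localDiscrep (lsSeq L S γ) #(lsAdmissible L S n) x

/-- The deviation `t_{n-1} - γ t_n` of the point counts from exact geometric growth. As in
`sum_lsAdmissible_succ`, `t_{-1}` stands for `t_0`. -/
def lsDefect (L S : ℕ) (γ : ℝ) (n : ℕ) : ℝ :=
  #(lsAdmissible L S (n - 1)) - γ * #(lsAdmissible L S n)

theorem lsLocalDiscrep_eq (L S : ℕ) (γ : ℝ) (n : ℕ) (x : ℝ) :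
    lsLocalDiscrep L S γ n x = lsCount L S γ n x - #(lsAdmissible L S n) * x := by
  simp only [lsLocalDiscrep, localDiscrep, lsCount, card_filter]
  rw [sum_lsSeq γ n fun u => if u < x then 1 else 0]

theorem abs_lsLocalDiscrep_le_card {L S : ℕ} {γ : ℝ} {n : ℕ} {x : ℝ}
    (hx : x ∈ Set.Icc (0 : ℝ) 1) : |lsLocalDiscrep L S γ n x| ≤ #(lsAdmissible L S n) := by
  have hcount : lsCount L S γ n x ≤ #(lsAdmissible L S n) := card_filter_le _ _
  rw [lsLocalDiscrep_eq]
  exact abs_sub_le_of_nonneg_of_le (Nat.cast_nonneg _) (by exact_mod_cast hcount)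
    (mul_nonneg (Nat.cast_nonneg _) hx.1) (mul_le_of_le_one_right (Nat.cast_nonneg _) hx.2)

namespace IsLSRatio

variable {L S : ℕ} {γ : ℝ} {n : ℕ}

theorem one_lt_base (h : IsLSRatio L S γ) : 1 < L + S :=
  Nat.add_lt_add_of_le_of_lt h.left_pos h.right_pos

theorem lt_one (h : IsLSRatio L S γ) : γ < 1 := by
  have hLγ : γ ≤ L * γ := le_mul_of_one_le_left h.pos.le (by exact_mod_cast h.left_pos)
  have hSγ : 0 < S * γ ^ 2 := mul_pos (Nat.cast_pos.2 h.right_pos) (pow_pos h.pos 2)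
  linarith [h.root]

theorem one_lt_mul (h : IsLSRatio L S γ) (hLS : L + 2 ≤ S) : 1 < S * γ := by
  by_contra! hle
  have hroot := h.root
  have hγ := h.pos
  have hLS' : (L : ℝ) + 2 ≤ S := by exact_mod_cast hLS
  nlinarith

theorem card_lsAdmissible_succ_mul_pow (h : IsLSRatio L S γ) (n : ℕ) :
    #(lsAdmissible L S (n + 2)) * γ ^ (n + 2) =
      L * γ * (#(lsAdmissible L S (n + 1)) * γ ^ (n + 1)) +
        S * γ ^ 2 * (#(lsAdmissible L S n) * γ ^ n) := by
  rw [card_lsAdmissible_succ h.left_pos, Nat.add_sub_cancel]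
  push_cast
  ring

theorem card_lsAdmissible_mul_pow_mem_Icc (h : IsLSRatio L S γ) (n : ℕ) :
    #(lsAdmissible L S n) * γ ^ n ∈ Set.Icc 1 γ⁻¹ := by
  have hL : 0 ≤ L * γ := mul_nonneg L.cast_nonneg h.pos.le
  have hS : 0 ≤ S * γ ^ 2 := by positivity
  induction n using Nat.twoStepInduction with
  | zero => simpa [lsAdmissible_zero h.left_pos] using (one_le_inv₀ h.pos).2 h.lt_one.le
  | one =>
    have hinv : γ⁻¹ = L + S * γ := inv_eq_of_mul_eq_one_right (by linear_combination h.root)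
    rw [card_lsAdmissible_succ h.left_pos, lsAdmissible_zero h.left_pos, pow_one, hinv]
    simp only [Finset.card_singleton, mul_one]
    push_cast
    have hS : (S : ℝ) * γ ^ 2 ≤ S * γ := by
      gcongr
      exact pow_le_of_le_one h.pos.le h.lt_one.le two_ne_zero
    have hL : (L : ℝ) * γ ≤ L := mul_le_of_le_one_right L.cast_nonneg h.lt_one.le
    constructor <;> linarith [h.root]
  | more n ih₀ ih₁ =>
    rw [h.card_lsAdmissible_succ_mul_pow]
    exact convex_Icc 1 γ⁻¹ ih₁ ih₀ hL hS h.root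

theorem lsDefect_eq (h : IsLSRatio L S γ) (n : ℕ) :
    lsDefect L S γ n = (1 - γ) * (-(S * γ)) ^ n := by
  induction n with
  | zero => simp [lsDefect, lsAdmissible_zero h.left_pos]
  | succ n ih =>
    rw [pow_succ, ← mul_assoc, ← ih, lsDefect, lsDefect, card_lsAdmissible_succ h.left_pos,
      Nat.add_sub_cancel]
    push_cast
    linear_combination (-(#(lsAdmissible L S n) : ℝ)) * h.root

theorem abs_lsDefect (h : IsLSRatio L S γ) (n : ℕ) :
    |lsDefect L S γ n| = (1 - γ) * (S * γ) ^ n := by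
  have hq : 0 ≤ S * γ := mul_nonneg S.cast_nonneg h.pos.le
  rw [h.lsDefect_eq, abs_mul, abs_pow, abs_neg, abs_of_nonneg hq,
    abs_of_nonneg (sub_nonneg.2 h.lt_one.le)]

theorem abs_lsDefect_le (h : IsLSRatio L S γ) (n : ℕ) : |lsDefect L S γ n| ≤ (S * γ) ^ n := by
  rw [h.abs_lsDefect]
  exact mul_le_of_le_one_left (pow_nonneg (mul_nonneg S.cast_nonneg h.pos.le) n)
    (by linarith [h.pos])

theorem lsPhi_mem_Ico (h : IsLSRatio L S γ) {m : ℕ} (hm : memNLS L S m) :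
    lsPhi L S γ m ∈ Set.Ico 0 1 := by
  have hγ := h.pos
  have hroot := h.root
  refine hm.induction h.left_pos h.one_lt_base (motive := fun m => lsPhi L S γ m ∈ Set.Ico 0 1)
    ?_ ?_ ?_
  · simp [lsPhi_zero h.left_pos]
  · rintro i hi m ⟨hm0, hm1⟩
    have hi' : (i : ℝ) + 1 ≤ L := by exact_mod_cast hi
    rw [lsPhi_long h.one_lt_base hi]
    refine ⟨by positivity, ?_⟩
    calc (i + lsPhi L S γ m) * γ < L * γ := by gcongr; linarith
      _ ≤ 1 := by rw [← hroot]; exact le_add_of_nonneg_right (by positivity)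
  · rintro i hi m ⟨hm0, hm1⟩
    have hi' : (i : ℝ) + 1 ≤ S := by exact_mod_cast hi
    rw [lsPhi_short h.left_pos h.one_lt_base hi]
    refine ⟨by positivity, ?_⟩
    calc L * γ + (i + lsPhi L S γ m) * γ ^ 2 < L * γ + S * γ ^ 2 := by gcongr; linarith
      _ = 1 := hroot

theorem lsCount_of_nonpos (h : IsLSRatio L S γ) {x : ℝ} (hx : x ≤ 0) : lsCount L S γ n x = 0 :=
  card_eq_zero.2 <| filter_eq_empty_iff.2 fun _ hm =>
    (hx.trans (h.lsPhi_mem_Ico (mem_lsAdmissible.1 hm).2).1).not_gt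

theorem lsCount_of_one_le (h : IsLSRatio L S γ) {x : ℝ} (hx : 1 ≤ x) :
    lsCount L S γ n x = #(lsAdmissible L S n) :=
  card_filter_eq_iff.2 fun _ hm => (h.lsPhi_mem_Ico (mem_lsAdmissible.1 hm).2).2.trans_le hx

theorem lsCount_succ (h : IsLSRatio L S γ) (n : ℕ) (x : ℝ) :
    lsCount L S γ (n + 1) x =
      ∑ i ∈ range L, lsCount L S γ n (x / γ - i) +
      ∑ i ∈ range S, lsCount L S γ (n - 1) ((x - L * γ) / γ ^ 2 - i) := by
  have hlong (i : ℕ) (u : ℝ) : u < x / γ - i ↔ (i + u) * γ < x := by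
    rw [lt_sub_iff_add_lt', lt_div_iff₀ h.pos]
  have hshort (i : ℕ) (u : ℝ) :
      u < (x - L * γ) / γ ^ 2 - i ↔ L * γ + (i + u) * γ ^ 2 < x := by
    rw [lt_sub_iff_add_lt', lt_div_iff₀ (pow_pos h.pos 2), lt_sub_iff_add_lt']
  simp only [lsCount, card_filter, hlong, hshort, sum_lsAdmissible_succ h.left_pos]
  congr 1 <;> refine sum_congr rfl fun i hi => sum_congr rfl fun m _ => ?_
  · rw [lsPhi_long h.one_lt_base (Finset.mem_range.1 hi)]
  · rw [lsPhi_short h.left_pos h.one_lt_base (Finset.mem_range.1 hi)]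

theorem sum_range_lsCount_sub (h : IsLSRatio L S γ) {j K : ℕ} (hj : j < K) {y : ℝ}
    (hy : y ∈ Set.Icc (0 : ℝ) 1) :
    ∑ i ∈ range K, lsCount L S γ n (j + y - i) = j * #(lsAdmissible L S n) + lsCount L S γ n y :=
  sum_range_sub_of_step (fun _ => h.lsCount_of_nonpos) (fun _ => h.lsCount_of_one_le) hj hy

theorem lsCount_succ_long (h : IsLSRatio L S γ) {j : ℕ} (hj : j < L) {y : ℝ}
    (hy : y ∈ Set.Icc (0 : ℝ) 1) :
    lsCount L S γ (n + 1) ((j + y) * γ) = j * #(lsAdmissible L S n) + lsCount L S γ n y := by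
  rw [h.lsCount_succ, mul_div_cancel_right₀ _ h.pos.ne', h.sum_range_lsCount_sub hj hy,
    add_eq_left]
  refine sum_eq_zero fun i _ => h.lsCount_of_nonpos ?_
  have hj' : (j : ℝ) + 1 ≤ L := by exact_mod_cast hj
  have hle : (j + y) * γ ≤ L * γ := mul_le_mul_of_nonneg_right (by linarith [hy.2]) h.pos.le
  have : ((j + y) * γ - L * γ) / γ ^ 2 ≤ 0 :=
    div_nonpos_of_nonpos_of_nonneg (by linarith) (sq_nonneg γ)
  linarith [i.cast_nonneg (α := ℝ)]

theorem lsCount_succ_short (h : IsLSRatio L S γ) {j : ℕ} (hj : j < S) {y : ℝ}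
    (hy : y ∈ Set.Icc (0 : ℝ) 1) :
    lsCount L S γ (n + 1) (L * γ + (j + y) * γ ^ 2) =
      L * #(lsAdmissible L S n) + j * #(lsAdmissible L S (n - 1)) + lsCount L S γ (n - 1) y := by
  have hγ := h.pos
  have hlong : ∀ i ∈ range L, lsCount L S γ n ((L * γ + (j + y) * γ ^ 2) / γ - i) =
      #(lsAdmissible L S n) := by
    refine fun i hi => h.lsCount_of_one_le ?_
    have hi' : (i : ℝ) + 1 ≤ L := by exact_mod_cast Finset.mem_range.1 hi
    have hdiv : (L * γ + (j + y) * γ ^ 2) / γ = L + (j + y) * γ := by field_simp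
    have : 0 ≤ (j + y) * γ := mul_nonneg (add_nonneg j.cast_nonneg hy.1) hγ.le
    linarith
  rw [h.lsCount_succ, sum_congr rfl hlong, add_sub_cancel_left,
    mul_div_cancel_right₀ _ (pow_ne_zero 2 hγ.ne'), h.sum_range_lsCount_sub hj hy, sum_const,
    Finset.card_range, smul_eq_mul, add_assoc]

theorem lsLocalDiscrep_zero_right (h : IsLSRatio L S γ) : lsLocalDiscrep L S γ n 0 = 0 := by
  rw [lsLocalDiscrep_eq, h.lsCount_of_nonpos le_rfl, Nat.cast_zero, mul_zero, sub_zero]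

theorem lsLocalDiscrep_one_right (h : IsLSRatio L S γ) : lsLocalDiscrep L S γ n 1 = 0 := by
  rw [lsLocalDiscrep_eq, h.lsCount_of_one_le le_rfl, mul_one, sub_self]

theorem lsLocalDiscrep_succ_long (h : IsLSRatio L S γ) {j : ℕ} (hj : j < L) {y : ℝ}
    (hy : y ∈ Set.Icc (0 : ℝ) 1) :
    lsLocalDiscrep L S γ (n + 1) ((j + y) * γ) =
      lsLocalDiscrep L S γ n y + (j + y) * lsDefect L S γ (n + 1) := by
  rw [lsLocalDiscrep_eq, lsLocalDiscrep_eq, h.lsCount_succ_long hj hy, lsDefect, Nat.add_sub_cancel]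
  push_cast
  ring

theorem lsLocalDiscrep_succ_short (h : IsLSRatio L S γ) {j : ℕ} (hj : j < S) {y : ℝ}
    (hy : y ∈ Set.Icc (0 : ℝ) 1) :
    lsLocalDiscrep L S γ (n + 1) (L * γ + (j + y) * γ ^ 2) =
      lsLocalDiscrep L S γ (n - 1) y + L * lsDefect L S γ (n + 1) +
        (j + y) * (lsDefect L S γ n + γ * lsDefect L S γ (n + 1)) := by
  rw [lsLocalDiscrep_eq, lsLocalDiscrep_eq, h.lsCount_succ_short hj hy, lsDefect, lsDefect,
    Nat.add_sub_cancel]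
  push_cast
  ring

theorem lsLocalDiscrep_succ_ratio (h : IsLSRatio L S γ) :
    lsLocalDiscrep L S γ (n + 1) γ = lsDefect L S γ (n + 1) := by
  simpa [h.lsLocalDiscrep_one_right] using
    h.lsLocalDiscrep_succ_long (n := n) h.left_pos ⟨zero_le_one, le_rfl⟩

theorem exists_mem_long_or_short (h : IsLSRatio L S γ) {x : ℝ} (hx : x ∈ Set.Icc (0 : ℝ) 1) :
    (∃ j < L, ∃ y ∈ Set.Icc (0 : ℝ) 1, x = (j + y) * γ) ∨
      ∃ j < S, ∃ y ∈ Set.Icc (0 : ℝ) 1, x = L * γ + (j + y) * γ ^ 2 := by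
  have hγ := h.pos
  rcases le_total x (L * γ) with hle | hle
  · left
    obtain ⟨j, hj, y, hy, hxy⟩ := exists_nat_lt_add_eq h.left_pos
      (⟨div_nonneg hx.1 hγ.le, (div_le_iff₀ hγ).2 hle⟩ : x / γ ∈ Set.Icc (0 : ℝ) L)
    exact ⟨j, hj, y, hy, by rw [← hxy, div_mul_cancel₀ _ hγ.ne']⟩
  · right
    have hγ2 : 0 < γ ^ 2 := pow_pos hγ 2
    obtain ⟨j, hj, y, hy, hxy⟩ := exists_nat_lt_add_eq h.right_pos
      (⟨div_nonneg (by linarith) hγ2.le, (div_le_iff₀ hγ2).2 (by linarith [h.root, hx.2])⟩ :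
        (x - L * γ) / γ ^ 2 ∈ Set.Icc (0 : ℝ) S)
    exact ⟨j, hj, y, hy, by rw [← hxy, div_mul_cancel₀ _ hγ2.ne', add_sub_cancel]⟩

theorem abs_lsLocalDiscrep_succ_le (h : IsLSRatio L S γ) (hq : 1 ≤ S * γ) {M : ℝ}
    (hn : ∀ y ∈ Set.Icc (0 : ℝ) 1, |lsLocalDiscrep L S γ n y| ≤ M)
    (hpred : ∀ y ∈ Set.Icc (0 : ℝ) 1, |lsLocalDiscrep L S γ (n - 1) y| ≤ M)
    {x : ℝ} (hx : x ∈ Set.Icc (0 : ℝ) 1) :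
    |lsLocalDiscrep L S γ (n + 1) x| ≤ M + (L + 2 * S) * (S * γ) ^ (n + 1) := by
  have hγ := h.pos
  have hd₁ := h.abs_lsDefect_le (n + 1)
  have hd₀ : |lsDefect L S γ n| ≤ (S * γ) ^ (n + 1) :=
    (h.abs_lsDefect_le n).trans (pow_le_pow_right₀ hq n.le_succ)
  set Q := (S * γ) ^ (n + 1)
  have hweight {j K : ℕ} (hj : j < K) {y d B : ℝ} (hy : y ∈ Set.Icc (0 : ℝ) 1) (hd : |d| ≤ B) :
      |(j + y) * d| ≤ K * B := by
    have hj' : (j : ℝ) + 1 ≤ K := by exact_mod_cast hj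
    rw [abs_mul, abs_of_nonneg (add_nonneg j.cast_nonneg hy.1)]
    gcongr
    linarith [hy.2]
  rcases h.exists_mem_long_or_short hx with ⟨j, hj, y, hy, rfl⟩ | ⟨j, hj, y, hy, rfl⟩
  · rw [h.lsLocalDiscrep_succ_long hj hy]
    calc _ ≤ |lsLocalDiscrep L S γ n y| + |(j + y) * lsDefect L S γ (n + 1)| := abs_add_le _ _
      _ ≤ M + L * Q := add_le_add (hn y hy) (hweight hj hy hd₁)
      _ ≤ M + (L + 2 * S) * Q := by
        gcongr
        linarith [S.cast_nonneg (α := ℝ)]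
  · have hshort : |lsDefect L S γ n + γ * lsDefect L S γ (n + 1)| ≤ 2 * Q := by
      have hγd : |γ * lsDefect L S γ (n + 1)| ≤ Q := by
        rw [abs_mul, abs_of_pos hγ]
        exact (mul_le_of_le_one_left (abs_nonneg _) h.lt_one.le).trans hd₁
      linarith [abs_add_le (lsDefect L S γ n) (γ * lsDefect L S γ (n + 1))]
    have hlong : |L * lsDefect L S γ (n + 1)| ≤ L * Q := by
      rw [abs_mul, Nat.abs_cast]
      gcongr
    rw [h.lsLocalDiscrep_succ_short hj hy]
    calc _ ≤ _ := abs_add_three _ _ _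
      _ ≤ M + L * Q + S * (2 * Q) := add_le_add_three (hpred y hy) hlong (hweight hj hy hshort)
      _ = M + (L + 2 * S) * Q := by ring

theorem abs_lsLocalDiscrep_le_sum (h : IsLSRatio L S γ) (hq : 1 ≤ S * γ) (n : ℕ) :
    ∀ x ∈ Set.Icc (0 : ℝ) 1,
      |lsLocalDiscrep L S γ n x| ≤ (L + 2 * S) * ∑ k ∈ range (n + 1), (S * γ) ^ k := by
  induction n using Nat.strong_induction_on with
  | _ n ih =>
  intro x hx
  cases n with
  | zero =>
    have hL : (1 : ℝ) ≤ L := by exact_mod_cast h.left_pos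
    refine (abs_lsLocalDiscrep_le_card hx).trans ?_
    simp only [lsAdmissible_zero h.left_pos, Finset.card_singleton, Nat.cast_one, zero_add,
      range_one, sum_singleton, pow_zero, mul_one]
    linarith [S.cast_nonneg (α := ℝ)]
  | succ n =>
    rw [sum_range_succ, mul_add]
    refine h.abs_lsLocalDiscrep_succ_le hq (ih n n.lt_succ_self)
      (fun y hy => (ih (n - 1) (by omega) y hy).trans ?_) hx
    gcongr
    omega

theorem abs_lsLocalDiscrep_le (h : IsLSRatio L S γ) (hq : 1 < S * γ) (n : ℕ) {x : ℝ}
    (hx : x ∈ Set.Icc (0 : ℝ) 1) :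
    |lsLocalDiscrep L S γ n x| ≤ (L + 2 * S) / (S * γ - 1) * (S * γ) ^ (n + 1) := by
  refine (h.abs_lsLocalDiscrep_le_sum hq.le n x hx).trans ?_
  rw [geom_sum_eq hq.ne', div_mul_eq_mul_div, mul_div_assoc]
  gcongr
  exact sub_le_self _ zero_le_one

theorem mul_discrep_lsSeq_le (h : IsLSRatio L S γ) (hq : 1 < S * γ) (n : ℕ) :
    #(lsAdmissible L S n) * discrep (lsSeq L S γ) #(lsAdmissible L S n) ≤
      2 * ((L + 2 * S) / (S * γ - 1) * (S * γ) ^ (n + 1)) :=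
  mul_discrep_le fun _ hu => h.abs_lsLocalDiscrep_le hq n hu

theorem le_mul_discrep_lsSeq (h : IsLSRatio L S γ) (n : ℕ) :
    (1 - γ) * (S * γ) ^ (n + 1) ≤
      #(lsAdmissible L S (n + 1)) * discrep (lsSeq L S γ) #(lsAdmissible L S (n + 1)) := by
  have hle : |lsLocalDiscrep L S γ (n + 1) γ - lsLocalDiscrep L S γ (n + 1) 0| ≤ _ :=
    abs_localDiscrep_sub_le le_rfl h.pos h.lt_one.le
  rwa [h.lsLocalDiscrep_succ_ratio, h.lsLocalDiscrep_zero_right, sub_zero, h.abs_lsDefect] at hle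

theorem card_lsAdmissible_mem_Icc (h : IsLSRatio L S γ) (n : ℕ) :
    (#(lsAdmissible L S n) : ℝ) ∈ Set.Icc (γ⁻¹ ^ n) (γ⁻¹ ^ (n + 1)) := by
  have hγn : 0 < γ ^ n := pow_pos h.pos n
  obtain ⟨hge, hle⟩ := h.card_lsAdmissible_mul_pow_mem_Icc n
  rw [pow_succ', inv_pow]
  exact ⟨(inv_le_iff_one_le_mul₀ hγn).2 hge, (le_mul_inv_iff₀ hγn).2 hle⟩

theorem card_lsAdmissible_rpow_mem_Icc (h : IsLSRatio L S γ) {q : ℝ} (hq : 1 ≤ q) (n : ℕ) :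
    (#(lsAdmissible L S n) : ℝ) ^ (-Real.log q / Real.log γ) ∈ Set.Icc (q ^ n) (q ^ (n + 1)) := by
  have hinv : 1 < γ⁻¹ := (one_lt_inv₀ h.pos).2 h.lt_one
  have hinv0 : 0 < γ⁻¹ := inv_pos.2 h.pos
  have hexp : -Real.log q / Real.log γ = Real.logb γ⁻¹ q := by
    rw [Real.logb, Real.log_inv, neg_div, div_neg]
  have hexp0 : 0 ≤ Real.logb γ⁻¹ q := Real.logb_nonneg hinv hq
  have hpow (k : ℕ) : (γ⁻¹ ^ k) ^ Real.logb γ⁻¹ q = q ^ k := by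
    rw [← Real.rpow_pow_comm hinv0.le, Real.rpow_logb hinv0 hinv.ne' (by linarith)]
  obtain ⟨hge, hle⟩ := h.card_lsAdmissible_mem_Icc n
  rw [hexp, ← hpow n, ← hpow (n + 1)]
  exact ⟨Real.rpow_le_rpow (by positivity) hge hexp0, Real.rpow_le_rpow (by positivity) hle hexp0⟩

end IsLSRatio

/-- If `S ≥ L+2`, then with `1−τ = −log(Sγ)/log γ` one has
`c₃′ t_n^{1−τ} ≤ t_n · D(ξ¹,…,ξ^{t_n}) ≤ c₃ t_n^{1−τ}` for all `n ≥ 1`. -/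
theorem ls_partition_discrepancy_S_ge_L_add_two (L S : ℕ) (hL : 0 < L) (hS : 0 < S)
    (hSL : L + 2 ≤ S)
    (γ : ℝ) (hγ0 : 0 < γ) (hγ1 : γ < 1)
    (hroot : (L : ℝ) * γ + (S : ℝ) * γ ^ 2 = 1)
    (t : ℕ → ℕ) (ht0 : t 0 = 1) (ht1 : t 1 = L + S)
    (htrec : ∀ n, 2 ≤ n → t n = L * t (n - 1) + S * t (n - 2)) :
    ∃ c₃ c₃' : ℝ, 0 < c₃ ∧ 0 < c₃' ∧ ∀ n : ℕ, 1 ≤ n →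
      c₃' * (t n : ℝ) ^ (-Real.log ((S : ℝ) * γ) / Real.log γ)
          ≤ (t n : ℝ) * discrep (lsSeq L S γ) (t n) ∧
      (t n : ℝ) * discrep (lsSeq L S γ) (t n)
          ≤ c₃ * (t n : ℝ) ^ (-Real.log ((S : ℝ) * γ) / Real.log γ) := by
  have h : IsLSRatio L S γ := ⟨hL, hS, hγ0, hroot⟩
  have hq : 1 < S * γ := h.one_lt_mul hSL
  have : 0 < S * γ - 1 := sub_pos.2 hq
  refine ⟨2 * ((L + 2 * S) / (S * γ - 1) * (S * γ)), (1 - γ) / (S * γ), by positivity,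
    div_pos (sub_pos.2 hγ1) (by linarith), fun n hn => ?_⟩
  obtain ⟨n, rfl⟩ := Nat.exists_eq_add_of_le' hn
  rw [← card_lsAdmissible hL ht0 ht1 htrec]
  obtain ⟨hlow, hupp⟩ := h.card_lsAdmissible_rpow_mem_Icc hq.le (n + 1)
  constructor
  · calc (1 - γ) / (S * γ) * _ ≤ (1 - γ) / (S * γ) * (S * γ) ^ (n + 1 + 1) := by gcongr
      _ = (1 - γ) * (S * γ) ^ (n + 1) := by rw [pow_succ]; field_simp
      _ ≤ _ := h.le_mul_discrep_lsSeq n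
  · calc _ ≤ 2 * ((L + 2 * S) / (S * γ - 1) * (S * γ) ^ (n + 1 + 1)) :=
          h.mul_discrep_lsSeq_le hq (n + 1)
      _ = 2 * ((L + 2 * S) / (S * γ - 1) * (S * γ)) * (S * γ) ^ (n + 1) := by ring
      _ ≤ _ := by gcongr
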